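/- Fix n ≥ 0 and d ≥ 1, let p_0 = [0 : ⋯ : 0 : 1] ∈ ℂP^{n+1}, and let U_{0,d}(ℙ^{n+1}) denote the subspace of SP^d(ℂP^{n+1}) consisting of those unordered d-tuples none of whose entries equals p_0. Then the inclusion U_{0,d}(ℙ^{n+1}) ↪ SP^d(ℂP^{n+1}) is 2n-connected; in particular it induces isomorphisms π_k(U_{0,d}(ℙ^{n+1})) → π_k(SP^d(ℂP^{n+1})) for all 0 ≤ k ≤ 2n. -/

import Mathlib

open scoped Topology

/-- Complex projective `n`-space `ℂP^n`: the quotient of `ℂ^{n+1} ∖ {0}` by the scalar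
action of `ℂ*`, with the quotient topology. -/
def CP (n : ℕ) : Type := Projectivization ℂ (Fin (n + 1) → ℂ)

instance (n : ℕ) : TopologicalSpace (CP n) :=
  inferInstanceAs (TopologicalSpace (Quotient (projectivizationSetoid ℂ (Fin (n + 1) → ℂ))))

/-- The setoid on `X^d` identifying tuples up to the permutation action of the symmetric
group on `d` letters. -/
def SPSetoid (X : Type) (d : ℕ) : Setoid (Fin d → X) where
  r f g := ∃ σ : Equiv.Perm (Fin d), f ∘ σ = g
  iseqv := by
    refine ⟨fun f => ⟨Equiv.refl _, rfl⟩, ?_, ?_⟩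
    · rintro f g ⟨σ, rfl⟩
      exact ⟨σ.symm, by funext i; simp⟩
    · rintro f g h ⟨σ, rfl⟩ ⟨τ, rfl⟩
      exact ⟨τ.trans σ, rfl⟩

/-- The `d`-th symmetric product `SP^d(X)`: the quotient of `X^d` by the permutation action
of the symmetric group on `d` letters, with the quotient topology. -/
def SP (X : Type) [TopologicalSpace X] (d : ℕ) : Type := Quotient (SPSetoid X d)

instance (X : Type) [TopologicalSpace X] (d : ℕ) : TopologicalSpace (SP X d) :=
  inferInstanceAs (TopologicalSpace (Quotient (SPSetoid X d)))

/-- The point `p₀ = [0 : ⋯ : 0 : 1] ∈ ℂP^{n+1}`. -/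
noncomputable def lastPoint (n : ℕ) : CP (n + 1) :=
  Projectivization.mk ℂ (Pi.single (Fin.last (n + 1)) (1 : ℂ))
    (fun h => one_ne_zero (α := ℂ) (by
      have := congrFun h (Fin.last (n + 1))
      rwa [Pi.single_eq_same] at this))

/-- An unordered `d`-tuple `s ∈ SP^d(X)` avoids `a : X` if none of its entries equals `a`. -/
def SPAvoids {X : Type} [TopologicalSpace X] {d : ℕ} (s : SP X d) (a : X) : Prop :=
  ∀ f : Fin d → X, Quotient.mk (SPSetoid X d) f = s → ∀ i, f i ≠ a

/-- The map induced on homotopy groups (based homotopy classes of maps from the `N`-cube,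
boundary to the basepoint) by a continuous map, given by postcomposition. -/
noncomputable def HomotopyGroup.inducedMap (N : Type) {X Y : Type}
    [TopologicalSpace X] [TopologicalSpace Y] (f : C(X, Y)) (x : X) :
    HomotopyGroup N X x → HomotopyGroup N Y (f x) :=
  Quotient.map
    (fun p => ⟨f.comp p.1, fun y hy => by
      simp only [ContinuousMap.comp_apply]
      rw [p.2 y hy]⟩)
    (fun p q h => h.map fun H => H.compContinuousMap f)

/-!
Translations of the affine chart around `p₀` extend to an action of `V = ℂ^{n+1}` on `ℂP^{n+1}`, and
the affine coordinate around `p₀` extends to a continuous map `ψ : ℂP^{n+1} → V` with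
`ψ (v +ᵥ p₀) = v` for small `v`. Let `g` be a family of unordered tuples over a compact metric
space `K` of Hausdorff dimension less than `dim_ℝ V`, avoiding `p₀` over a closed set `B`. Near each
parameter `ψ` can be perturbed so as to take finitely many values on the entries of `g t`; averaging
these perturbations with Lipschitz weights, the values taken over all of `K` form a set of dimension
at most `dim K`, so subtracting a small generic vector yields `h` close to `ψ` which vanishes at no
entry of `g t`. Now move each entry `x` of `g t` by `κ t • (h t x - ψ x)`, where `κ` is `0` on `B`
and `1` outside a small neighbourhood `W` of `B`. If `x` ended up at `p₀`, then
`x = v +ᵥ p₀` with `v = κ t • (ψ x - h t x)` small; over `W` no entry is so close to `p₀`, and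
elsewhere `ψ x = v = ψ x - h t x`, so that `h t x = 0`. Applied to cubes and to cylinders over
cubes this gives surjectivity and injectivity on homotopy groups.
-/

open scoped unitInterval
open Set Filter Module Topology

theorem isOpenQuotientMap_of_orbits {X Y ι : Type*} [TopologicalSpace X] [TopologicalSpace Y]
    {π : X → Y} (hπ : IsQuotientMap π) {φ : ι → X → X} (hφ : ∀ i, Continuous (φ i))
    (h : ∀ x y, π x = π y ↔ ∃ i, φ i x = y) : IsOpenQuotientMap π := by
  refine ⟨hπ.surjective, hπ.continuous, fun W hW => ?_⟩
  have saturation : π ⁻¹' (π '' W) = ⋃ i, φ i ⁻¹' W := by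
    ext x
    simp only [mem_preimage, mem_image, mem_iUnion]
    constructor
    · rintro ⟨y, hy, hxy⟩
      obtain ⟨i, rfl⟩ := (h x y).1 hxy.symm
      exact ⟨i, hy⟩
    · rintro ⟨i, hi⟩
      exact ⟨φ i x, hi, ((h x _).2 ⟨i, rfl⟩).symm⟩
  rw [← hπ.isOpen_preimage, saturation]
  exact isOpen_iUnion fun i => hW.preimage (hφ i)

namespace SP

variable {X Y : Type} [TopologicalSpace X] [TopologicalSpace Y] {d : ℕ}

/-- The unordered tuple underlying an ordered `d`-tuple. -/
def mk (f : Fin d → X) : SP X d := Quotient.mk (SPSetoid X d) f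

theorem mk_eq_mk {f g : Fin d → X} : mk f = mk g ↔ ∃ τ : Equiv.Perm (Fin d), f ∘ τ = g :=
  Quotient.eq

theorem mk_surjective : Function.Surjective (mk : (Fin d → X) → SP X d) :=
  Quotient.mk_surjective

theorem isOpenQuotientMap_mk : IsOpenQuotientMap (mk : (Fin d → X) → SP X d) :=
  isOpenQuotientMap_of_orbits isQuotientMap_quot_mk
    (fun τ : Equiv.Perm (Fin d) => continuous_pi fun i => continuous_apply (τ i))
    (fun _ _ => mk_eq_mk)

/-- The set of entries of an unordered tuple, i.e. the support of the corresponding 0-cycle. -/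
def support (s : SP X d) : Set X :=
  Quotient.lift (s := SPSetoid X d) range
    (by rintro f _ ⟨τ, rfl⟩; exact (τ.surjective.range_comp f).symm) s

@[simp]
theorem support_mk (f : Fin d → X) : (mk f).support = range f := rfl

theorem finite_support (s : SP X d) : s.support.Finite := by
  obtain ⟨f, rfl⟩ := mk_surjective s
  exact finite_range f

theorem avoids_iff_notMem_support {s : SP X d} {a : X} : SPAvoids s a ↔ a ∉ s.support := by
  constructor
  · obtain ⟨f, rfl⟩ := mk_surjective s
    rintro h ⟨i, hi⟩
    exact h f rfl i hi
  · rintro h f rfl i rfl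
    exact h ⟨i, rfl⟩

theorem isOpen_setOf_support_subset {O : Set X} (hO : IsOpen O) :
    IsOpen {s : SP X d | s.support ⊆ O} := by
  rw [← isOpenQuotientMap_mk.isQuotientMap.isOpen_preimage]
  simp only [preimage_ofPred_eq, support_mk, range_subset_iff, ofPred_forall]
  exact isOpen_iInter_of_finite fun i => hO.preimage (continuous_apply i)

/-- The pushforward of an unordered tuple along a map. -/
def map (F : X → Y) (s : SP X d) : SP Y d :=
  Quotient.map' (s₁ := SPSetoid X d) (s₂ := SPSetoid Y d) (F ∘ ·)
    (by rintro f _ ⟨τ, rfl⟩; exact ⟨τ, rfl⟩) s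

@[simp]
theorem map_mk (F : X → Y) (f : Fin d → X) : map F (mk f) = mk (F ∘ f) := rfl

@[simp]
theorem support_map (F : X → Y) (s : SP X d) : (s.map F).support = F '' s.support := by
  obtain ⟨f, rfl⟩ := mk_surjective s
  simp [range_comp]

@[simp]
theorem map_id' (s : SP X d) : s.map (fun x => x) = s := by
  obtain ⟨f, rfl⟩ := mk_surjective s
  rfl

theorem continuous_map {P : Type*} [TopologicalSpace P] {F : P → X → Y} {g : P → SP X d}
    (hF : Continuous fun q : P × X => F q.1 q.2) (hg : Continuous g) :
    Continuous fun p => (g p).map (F p) := by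
  suffices Continuous fun q : P × SP X d => q.2.map (F q.1) from
    this.comp (continuous_id.prodMk hg)
  rw [(IsOpenQuotientMap.id.prodMap isOpenQuotientMap_mk).isQuotientMap.continuous_iff]
  refine isOpenQuotientMap_mk.continuous.comp (continuous_pi fun i => ?_)
  exact hF.comp (continuous_fst.prodMk ((continuous_apply i).comp continuous_snd))

theorem isOpen_setOf_vadd_notMem_support {V K : Type*} [TopologicalSpace V] [AddGroup V]
    [ContinuousNeg V] [TopologicalSpace K] [AddAction V X] [ContinuousVAdd V X] {a : X}
    (ha : IsClosed {a}) (g : C(K, SP X d)) :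
    IsOpen {q : V × K | q.1 +ᵥ a ∉ (g q.2).support} := by
  have translated : Continuous fun q : V × K => (g q.2).map (-q.1 +ᵥ ·) :=
    continuous_map (by fun_prop) (by fun_prop)
  convert (isOpen_setOf_support_subset ha.isOpen_compl).preimage translated using 1
  ext q
  simp [mem_image, neg_vadd_eq_iff]

end SP

section GeneralPosition

variable {V : Type*} [NormedAddCommGroup V] [NormedSpace ℝ V]

theorem exists_continuous_near_id_eqOn_ball (q : V) {ε : ℝ} (hε : 0 < ε) :
    ∃ θ : V → V, Continuous θ ∧ (∀ z, dist (θ z) z ≤ ε) ∧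
      EqOn θ (fun _ => q) (Metric.ball q ε) := by
  have hpos (z : V) : 0 < max ε ‖z - q‖ := lt_max_of_lt_left hε
  refine ⟨fun z => z - (ε / max ε ‖z - q‖) • (z - q), ?_, fun z => ?_, fun z hz => ?_⟩
  · have : Continuous fun z => ε / max ε ‖z - q‖ :=
      continuous_const.div (by fun_prop) fun z => (hpos z).ne'
    fun_prop
  · rw [dist_eq_norm, sub_sub_cancel_left, norm_neg, norm_smul,
      Real.norm_of_nonneg (div_nonneg hε.le (hpos z).le), div_mul_eq_mul_div, div_le_iff₀ (hpos z)]
    exact mul_le_mul_of_nonneg_left (le_max_right _ _) hε.le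
  · rw [mem_ball_iff_norm] at hz
    simp [max_eq_left hz.le, hε.ne']

theorem exists_continuous_near_id_finite_image {P : Set V} (hP : P.Finite) {δ : ℝ} (hδ : 0 < δ) :
    ∃ (θ : V → V) (O : Set V), Continuous θ ∧ (∀ z, dist (θ z) z ≤ δ) ∧ IsOpen O ∧ P ⊆ O ∧
      (θ '' O).Finite := by
  induction P, hP using Set.Finite.induction_on generalizing δ with
  | empty => exact ⟨id, ∅, continuous_id, by simp [hδ.le], isOpen_empty, subset_rfl, by simp⟩
  | @insert p P _ _ ih =>
    obtain ⟨θ, O, hθ, hnear, hO, hPO, hfin⟩ := ih (half_pos hδ)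
    obtain ⟨η, hη, hηnear, hηball⟩ := exists_continuous_near_id_eqOn_ball (θ p) (half_pos hδ)
    refine ⟨η ∘ θ, θ ⁻¹' Metric.ball (θ p) (δ / 2) ∪ O, hη.comp hθ, fun z => ?_,
      (Metric.isOpen_ball.preimage hθ).union hO, ?_, ?_⟩
    · calc dist (η (θ z)) z ≤ dist (η (θ z)) (θ z) + dist (θ z) z := dist_triangle _ _ _
        _ ≤ δ / 2 + δ / 2 := add_le_add (hηnear _) (hnear z)
        _ = δ := add_halves δ
    · exact insert_subset (Or.inl (Metric.mem_ball_self (half_pos hδ)))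
        (hPO.trans subset_union_right)
    · rw [image_union, image_comp η θ O]
      refine Finite.union ((finite_singleton (θ p)).subset ?_) (hfin.image η)
      rintro _ ⟨z, hz, rfl⟩
      exact hηball hz

theorem exists_lipschitzWith_bumps {K : Type*} [PseudoMetricSpace K] [CompactSpace K]
    {N : K → Set K} (hN : ∀ t, N t ∈ 𝓝 t) :
    ∃ (T : Finset K) (μ : K → T → ℝ), LipschitzWith 1 μ ∧ (∀ t a, 0 ≤ μ t a) ∧
      (∀ t a, μ t a ≠ 0 → t ∈ N a) ∧ ∀ t, 0 < ∑ a, μ t a := by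
  choose ε hε hball using fun t => Metric.mem_nhds_iff.1 (hN t)
  obtain ⟨T, hT⟩ := CompactSpace.elim_nhds_subcover (fun t => Metric.ball t (ε t))
    fun t => Metric.ball_mem_nhds t (hε t)
  have nonneg (t : K) (a : T) : 0 ≤ max (ε a - dist t a) 0 := le_max_right _ _
  refine ⟨T, fun t a => max (ε a - dist t a) 0, ?_, nonneg, fun t a hta => ?_, fun t => ?_⟩
  · refine LipschitzWith.of_dist_le_mul fun s t => ?_
    rw [NNReal.coe_one, one_mul, dist_pi_le_iff dist_nonneg]
    intro a
    calc |max (ε a - dist s a) 0 - max (ε a - dist t a) 0|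
        ≤ |(ε a - dist s a) - (ε a - dist t a)| := abs_max_sub_max_le_abs _ _ _
      _ = |dist t a - dist s a| := by rw [sub_sub_sub_cancel_left]
      _ ≤ dist t s := abs_dist_sub_le t s a
      _ = dist s t := dist_comm t s
  · refine hball a (Metric.mem_ball.2 ?_)
    by_contra! h
    exact hta (max_eq_right (sub_nonpos.2 h))
  · obtain ⟨a, ha, hta⟩ : ∃ a ∈ T, dist t a < ε a := by
      simpa using hT.ge (mem_univ t)
    exact Finset.sum_pos' (fun a _ => nonneg t a)
      ⟨⟨a, ha⟩, Finset.mem_univ _, lt_max_of_lt_left (sub_pos.2 hta)⟩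

section CenterMass

variable {K T : Type*} [MetricSpace K] [Fintype T] {μ : K → T → ℝ} {C : NNReal}

theorem dimH_range_centerMass_le (hμ : LipschitzWith C μ) (hpos : ∀ t, 0 < ∑ a, μ t a)
    (c : T → V) : dimH (range fun t => Finset.univ.centerMass (μ t) c) ≤ dimH (univ : Set K) := by
  have smooth : ContDiffOn ℝ 1 (fun m : T → ℝ => Finset.univ.centerMass m c)
      {m | 0 < ∑ a, m a} := by
    unfold Finset.centerMass
    refine ContDiffOn.smul (ContDiffOn.inv (by fun_prop) fun m hm => hm.ne') (by fun_prop)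
  have convex : Convex ℝ {m : T → ℝ | 0 < ∑ a, m a} :=
    convex_halfSpace_gt (IsLinearMap.mk (by simp [Finset.sum_add_distrib])
      (by simp [Finset.mul_sum])) 0
  calc dimH (range fun t => Finset.univ.centerMass (μ t) c)
      = dimH ((fun m => Finset.univ.centerMass m c) '' range μ) := by rw [← range_comp]; rfl
    _ ≤ dimH (range μ) := smooth.dimH_image_le convex (range_subset_iff.2 hpos)
    _ ≤ dimH (univ : Set K) := hμ.dimH_range_le

theorem dense_setOf_ne_centerMass [FiniteDimensional ℝ V]
    (hK : dimH (univ : Set K) < finrank ℝ V) (hμ : LipschitzWith C μ)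
    (hpos : ∀ t, 0 < ∑ a, μ t a) {S : T → Set V} (hS : ∀ a, (S a).Finite) :
    Dense {v | ∀ t, ∀ c : T → V, (∀ a, μ t a ≠ 0 → c a ∈ S a) →
      v ≠ Finset.univ.centerMass (μ t) c} := by
  classical
  have hfin : (univ.pi fun a => insert 0 (S a)).Finite := Finite.pi fun a => (hS a).insert 0
  set bad : Set V := ⋃ c ∈ univ.pi fun a => insert 0 (S a),
    range fun t => Finset.univ.centerMass (μ t) c
  have hbad : dimH bad < finrank ℝ V := by
    rw [dimH_bUnion hfin.countable]
    exact (iSup₂_le fun c _ => dimH_range_centerMass_le hμ hpos c).trans_lt hK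
  refine (dense_compl_of_dimH_lt_finrank hbad).mono ?_
  intro v hv t c hc hvc
  refine hv (mem_iUnion₂.2 ⟨fun a => if μ t a = 0 then 0 else c a, fun a _ => ?_, t, ?_⟩)
  · by_cases h : μ t a = 0
    · simp [h]
    · simp [h, hc a h]
  · rw [hvc]
    refine congrArg (_ • ·) (Finset.sum_congr rfl fun a _ => ?_)
    by_cases h : μ t a = 0 <;> simp [h]

end CenterMass

variable {X : Type} [TopologicalSpace X] {d : ℕ} {ψ : X → V}

theorem exists_eventually_mapsTo_support_finite {K : Type*} [TopologicalSpace K]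
    (hψ : Continuous ψ) {δ : ℝ} (hδ : 0 < δ) (g : C(K, SP X d)) (t₀ : K) :
    ∃ (φ : X → V) (S : Set V), Continuous φ ∧ (∀ x, dist (φ x) (ψ x) ≤ δ) ∧ S.Finite ∧
      ∀ᶠ t in 𝓝 t₀, MapsTo φ (g t).support S := by
  obtain ⟨θ, O, hθ, hnear, hO, hsupport, hfin⟩ :=
    exists_continuous_near_id_finite_image ((g t₀).finite_support.image ψ) hδ
  refine ⟨θ ∘ ψ, θ '' O, hθ.comp hψ, fun x => hnear (ψ x), hfin, ?_⟩
  filter_upwards [g.continuous.continuousAt.eventually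
    ((SP.isOpen_setOf_support_subset (hO.preimage hψ)).mem_nhds (image_subset_iff.1 hsupport))]
    with t ht x hx
  exact mem_image_of_mem θ (ht hx)

theorem exists_near_ne_zero_on_support [FiniteDimensional ℝ V] {K : Type*} [MetricSpace K]
    [CompactSpace K] (hK : dimH (univ : Set K) < finrank ℝ V)
    (hψ : Continuous ψ) {δ : ℝ} (hδ : 0 < δ) (g : C(K, SP X d)) :
    ∃ h : K → X → V, Continuous (fun q : K × X => h q.1 q.2) ∧
      (∀ t x, dist (h t x) (ψ x) < δ) ∧ ∀ t, ∀ x ∈ (g t).support, h t x ≠ 0 := by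
  choose φ S hφ hnear hS hmaps using
    exists_eventually_mapsTo_support_finite hψ (half_pos hδ) g
  obtain ⟨T, μ, hμ, hnonneg, hmem, hpos⟩ := exists_lipschitzWith_bumps hmaps
  obtain ⟨v, hv, hvδ⟩ := (dense_setOf_ne_centerMass hK hμ hpos fun a : T => hS a).exists_dist_lt
    0 (half_pos hδ)
  refine ⟨fun t x => Finset.univ.centerMass (μ t) (fun a => φ a x) - v, ?_, fun t x => ?_,
    fun t x hx h0 => ?_⟩
  · have weight (a : T) : Continuous fun q : K × X => μ q.1 a :=
      (continuous_apply a).comp (hμ.continuous.comp continuous_fst)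
    unfold Finset.centerMass
    refine .sub (.smul ?_ ?_) continuous_const
    · exact (continuous_finsetSum _ fun a _ => weight a).inv₀ fun q => (hpos q.1).ne'
    · exact continuous_finsetSum _ fun a _ => (weight a).smul ((hφ a).comp continuous_snd)
  · have average_near : dist (Finset.univ.centerMass (μ t) fun a => φ a x) (ψ x) ≤ δ / 2 :=
      (convex_closedBall (ψ x) (δ / 2)).centerMass_mem (fun a _ => hnonneg t a) (hpos t)
        fun a _ => hnear a x
    rw [dist_zero_left] at hvδ
    calc dist (Finset.univ.centerMass (μ t) (fun a => φ a x) - v) (ψ x)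
        ≤ dist (Finset.univ.centerMass (μ t) (fun a => φ a x) - v)
            (Finset.univ.centerMass (μ t) fun a => φ a x) +
          dist (Finset.univ.centerMass (μ t) fun a => φ a x) (ψ x) := dist_triangle _ _ _
      _ < δ / 2 + δ / 2 := add_lt_add_of_lt_of_le (by simpa [dist_eq_norm] using hvδ) average_near
      _ = δ := add_halves δ
  · exact hv t (fun a => φ a x) (fun a ha => hmem t a ha hx) (sub_eq_zero.1 h0).symm

end GeneralPosition

section Compression

variable {Y Z : Type*} [TopologicalSpace Y] [TopologicalSpace Z]

/-- The compression property of the pair `(Z, S)` for the subspace `A` of `Y`: every map of pairs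
`(Z, S) → (Y, A)` is homotopic, relative to `S`, to a map into `A`. -/
def IsCompressible (S : Set Z) (A : Set Y) : Prop :=
  ∀ g : C(Z, Y), MapsTo g S A → ∃ p : C(Z, A),
    g.HomotopicRel ((⟨Subtype.val, continuous_subtype_val⟩ : C(A, Y)).comp p) S

/-- The part of the boundary of the cylinder `I × Z` on which a homotopy relative to `S` is
prescribed by its two ends. -/
def cylinderFrontier (S : Set Z) : Set (I × Z) := {q | q.1 = 0 ∨ q.1 = 1 ∨ q.2 ∈ S}

theorem isClosed_cylinderFrontier {S : Set Z} (hS : IsClosed S) :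
    IsClosed (cylinderFrontier S) :=
  (isClosed_singleton.preimage continuous_fst).union
    ((isClosed_singleton.preimage continuous_fst).union (hS.preimage continuous_snd))

theorem IsCompressible.homotopicRel_of_comp_val {S : Set Z} {A : Set Y} {p q : C(Z, A)}
    (hA : IsCompressible (cylinderFrontier S) A)
    (h : ((⟨Subtype.val, continuous_subtype_val⟩ : C(A, Y)).comp p).HomotopicRel
      ((⟨Subtype.val, continuous_subtype_val⟩ : C(A, Y)).comp q) S) :
    p.HomotopicRel q S := by
  obtain ⟨F⟩ := h
  have hF : MapsTo F.toContinuousMap (cylinderFrontier S) A := by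
    rintro ⟨s, t⟩ (rfl | rfl | ht)
    · exact (F.apply_zero t).symm ▸ (p t).2
    · exact (F.apply_one t).symm ▸ (q t).2
    · exact (F.eq_fst s ht).symm ▸ (p t).2
  obtain ⟨G, hG⟩ := hA F.toContinuousMap hF
  have agree {x : I × Z} (hx : x ∈ cylinderFrontier S) : (G x : Y) = F x :=
    (hG.fst_eq_snd hx).symm
  refine ⟨⟨⟨G, fun t => Subtype.ext ?_, fun t => Subtype.ext ?_⟩, fun s t ht => Subtype.ext ?_⟩⟩
  · exact (agree (Or.inl rfl)).trans (F.apply_zero t)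
  · exact (agree (Or.inr (Or.inl rfl))).trans (F.apply_one t)
  · exact (agree (Or.inr (Or.inr ht))).trans (F.eq_fst s ht)

end Compression

section InducedMap

variable {Y N : Type} [TopologicalSpace Y] {A : Set Y}

theorem IsCompressible.inducedMap_surjective (hA : IsCompressible (Cube.boundary N) A) (u : A) :
    Function.Surjective
      (HomotopyGroup.inducedMap N (⟨Subtype.val, continuous_subtype_val⟩ : C(A, Y)) u) := by
  rintro ⟨γ⟩
  obtain ⟨p, hp⟩ := hA γ.1 fun y hy => (γ.2 y hy).symm ▸ u.2
  have hpu : ∀ y ∈ Cube.boundary N, p y = u := fun y hy =>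
    Subtype.ext ((hp.fst_eq_snd hy).symm.trans (γ.2 y hy))
  exact ⟨Quotient.mk _ ⟨p, hpu⟩, Quotient.sound hp.symm⟩

theorem IsCompressible.inducedMap_injective
    (hA : IsCompressible (cylinderFrontier (Cube.boundary N)) A) (u : A) :
    Function.Injective
      (HomotopyGroup.inducedMap N (⟨Subtype.val, continuous_subtype_val⟩ : C(A, Y)) u) := by
  rintro ⟨p⟩ ⟨q⟩ hpq
  exact Quotient.sound (hA.homotopicRel_of_comp_val (Quotient.exact hpq))

end InducedMap

section Cubes

variable {N : Type*}

theorem isClosed_cubeBoundary [Finite N] : IsClosed (Cube.boundary N) := by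
  simp only [Cube.boundary, ofPred_exists, ofPred_or]
  exact isClosed_iUnion_of_finite fun i =>
    (isClosed_singleton.preimage (continuous_apply i)).union
      (isClosed_singleton.preimage (continuous_apply i))

theorem dimH_univ_le_finrank {K E : Type*} [EMetricSpace K] [NormedAddCommGroup E]
    [NormedSpace ℝ E] [FiniteDimensional ℝ E] {j : K → E} (hj : Isometry j) :
    dimH (univ : Set K) ≤ finrank ℝ E := by
  rw [← hj.dimH_image, ← Real.dimH_univ_eq_finrank E]
  exact dimH_mono (subset_univ _)

theorem dimH_univ_cube_le [Fintype N] : dimH (univ : Set (N → I)) ≤ Fintype.card N := by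
  have isometry : Isometry fun (y : N → I) i => (y i : ℝ) :=
    Isometry.piMap (fun _ => Subtype.val) fun _ => isometry_subtype_coe
  simpa using dimH_univ_le_finrank isometry

theorem dimH_univ_cylinder_cube_le [Fintype N] :
    dimH (univ : Set (I × (N → I))) ≤ Fintype.card N + 1 := by
  have isometry : Isometry fun q : I × (N → I) => ((q.1 : ℝ), fun i => (q.2 i : ℝ)) :=
    fun x y => by simp [Prod.edist_eq, edist_pi_def, Subtype.edist_eq]
  simpa [add_comm] using dimH_univ_le_finrank isometry

end Cubes

section Displacement

variable {V : Type*} [NormedAddCommGroup V] [NormedSpace ℝ V] [FiniteDimensional ℝ V]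
  {K : Type*} [MetricSpace K] [CompactSpace K]
  {X : Type} [TopologicalSpace X] [AddAction V X] [ContinuousVAdd V X] {d : ℕ}

theorem exists_displacement (hK : dimH (univ : Set K) < finrank ℝ V) {a : X} (ha : IsClosed {a})
    {ψ : X → V} (hψ : Continuous ψ) (hψa : ∀ᶠ v in 𝓝 (0 : V), ψ (v +ᵥ a) = v)
    (g : C(K, SP X d)) {B : Set K} (hB : IsClosed B) (hgB : ∀ t ∈ B, a ∉ (g t).support) :
    ∃ D : K → X → V, Continuous (fun q : K × X => D q.1 q.2) ∧ (∀ t ∈ B, D t = 0) ∧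
      ∀ t, ∀ x ∈ (g t).support, D t x +ᵥ x ≠ a := by
  have tube : ({0} : Set V) ×ˢ B ⊆ {q | q.1 +ᵥ a ∉ (g q.2).support} := by
    rintro ⟨v, t⟩ ⟨rfl, ht⟩
    simpa using hgB t ht
  obtain ⟨U, W, hU, hW, h0U, hBW, hUW⟩ := generalized_tube_lemma isCompact_singleton
    hB.isCompact (SP.isOpen_setOf_vadd_notMem_support ha g) tube
  obtain ⟨δ, hδ, hball⟩ := Metric.eventually_nhds_iff.1 (hψa.and (hU.mem_nhds (h0U rfl)))
  obtain ⟨h, hh, hnear, hne⟩ := exists_near_ne_zero_on_support hK hψ hδ g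
  obtain ⟨κ, hκB, hκW, hκ⟩ := exists_continuous_zero_one_of_isClosed hB hW.isClosed_compl
    (disjoint_compl_right_iff_subset.2 hBW)
  refine ⟨fun t x => κ t • (h t x - ψ x), by fun_prop, fun t ht => ?_, fun t x hx hxa => ?_⟩
  · ext x
    simp [hκB ht]
  have small : dist (-(κ t • (h t x - ψ x))) 0 < δ := by
    rw [dist_zero_right, norm_neg, norm_smul, Real.norm_of_nonneg (hκ t).1]
    calc κ t * ‖h t x - ψ x‖ ≤ ‖h t x - ψ x‖ := mul_le_of_le_one_left (norm_nonneg _) (hκ t).2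
      _ < δ := by simpa [dist_eq_norm] using hnear t x
  obtain ⟨hψx, hmemU⟩ := hball small
  rw [← hxa, neg_vadd_vadd] at hψx
  by_cases ht : t ∈ W
  · refine hUW (mk_mem_prod hmemU ht) ?_
    simpa only [← hxa, neg_vadd_vadd] using hx
  · refine hne t x hx ?_
    have : ψ x = ψ x - h t x := by simpa [hκW ht] using hψx
    exact sub_eq_self.1 this.symm

theorem SP.isCompressible_avoids (hK : dimH (univ : Set K) < finrank ℝ V) {a : X}
    (ha : IsClosed {a}) {ψ : X → V} (hψ : Continuous ψ)
    (hψa : ∀ᶠ v in 𝓝 (0 : V), ψ (v +ᵥ a) = v) {B : Set K} (hB : IsClosed B) :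
    IsCompressible B {s : SP X d | SPAvoids s a} := by
  intro g hg
  obtain ⟨D, hD, hDB, hDa⟩ := exists_displacement hK ha hψ hψa g hB fun t ht =>
    SP.avoids_iff_notMem_support.1 (hg ht)
  have avoids (t : K) : SPAvoids ((g t).map fun x => D t x +ᵥ x) a := by
    rw [SP.avoids_iff_notMem_support, SP.support_map]
    rintro ⟨x, hx, hxa⟩
    exact hDa t x hx hxa
  let H : C(I × K, SP X d) :=
    ⟨fun q => (g q.2).map fun x => ((q.1 : ℝ) • D q.2 x) +ᵥ x,
      SP.continuous_map (by fun_prop) (by fun_prop)⟩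
  have continuous_end : Continuous fun t => (g t).map fun x => D t x +ᵥ x :=
    SP.continuous_map (by fun_prop) g.continuous
  refine ⟨⟨fun t => ⟨_, avoids t⟩, continuous_end.subtype_mk avoids⟩,
    ⟨⟨⟨H, fun t => ?_, fun t => ?_⟩, fun s t ht => ?_⟩⟩⟩
  · simp [H]
  · simp [H]
  · simp [H, hDB t ht]

theorem SP.inducedMap_avoids_surjective {N : Type} [Fintype N] (hN : Fintype.card N < finrank ℝ V)
    {a : X} (ha : IsClosed {a}) {ψ : X → V} (hψ : Continuous ψ)
    (hψa : ∀ᶠ v in 𝓝 (0 : V), ψ (v +ᵥ a) = v) (u : {s : SP X d // SPAvoids s a}) :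
    Function.Surjective (HomotopyGroup.inducedMap N
      (⟨Subtype.val, continuous_subtype_val⟩ : C({s : SP X d // SPAvoids s a}, SP X d)) u) :=
  (SP.isCompressible_avoids (dimH_univ_cube_le.trans_lt (by exact_mod_cast hN)) ha hψ hψa
    isClosed_cubeBoundary).inducedMap_surjective u

theorem SP.inducedMap_avoids_injective {N : Type} [Fintype N]
    (hN : Fintype.card N + 1 < finrank ℝ V) {a : X} (ha : IsClosed {a}) {ψ : X → V}
    (hψ : Continuous ψ) (hψa : ∀ᶠ v in 𝓝 (0 : V), ψ (v +ᵥ a) = v)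
    (u : {s : SP X d // SPAvoids s a}) :
    Function.Injective (HomotopyGroup.inducedMap N
      (⟨Subtype.val, continuous_subtype_val⟩ : C({s : SP X d // SPAvoids s a}, SP X d)) u) :=
  (SP.isCompressible_avoids (dimH_univ_cylinder_cube_le.trans_lt (by exact_mod_cast hN)) ha hψ hψa
    (isClosed_cylinderFrontier isClosed_cubeBoundary)).inducedMap_injective u

end Displacement

namespace CP

variable {n : ℕ}

/-- The point of `ℂP^n` with the given homogeneous coordinates. -/
noncomputable def mk (y : {y : Fin (n + 1) → ℂ // y ≠ 0}) : CP n :=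
  Projectivization.mk ℂ y.1 y.2

theorem mk_eq_mk {x y : {y : Fin (n + 1) → ℂ // y ≠ 0}} :
    mk x = mk y ↔ ∃ c : ℂˣ, c • x = y := by
  rw [eq_comm]
  simp only [Subtype.ext_iff]
  exact Projectivization.mk_eq_mk_iff ℂ _ _ y.2 x.2

theorem mk_surjective : Function.Surjective (mk (n := n)) := Quotient.mk_surjective

theorem isOpenQuotientMap_mk : IsOpenQuotientMap (mk (n := n)) :=
  isOpenQuotientMap_of_orbits isQuotientMap_quot_mk
    (fun c : ℂˣ => ((continuous_const_smul c).comp continuous_subtype_val).subtype_mk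
      fun y => (c • y).2)
    (fun _ _ => mk_eq_mk)

theorem continuous_coord (i : Fin (n + 1)) :
    Continuous fun y : {y : Fin (n + 1) → ℂ // y ≠ 0} => y.1 i :=
  (continuous_apply i).comp continuous_subtype_val

/-- The translation of the affine chart `{y_n ≠ 0} ≅ ℂ^n` of `ℂP^n` by `v`, written in
homogeneous coordinates. -/
def translation (v : Fin n → ℂ) : (Fin (n + 1) → ℂ) ≃ₗ[ℂ] (Fin (n + 1) → ℂ) :=
  LinearEquiv.transvection (f := LinearMap.proj (Fin.last n)) (v := Fin.snoc v 0) (by simp)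

theorem translation_apply (v : Fin n → ℂ) (y : Fin (n + 1) → ℂ) :
    translation v y = y + y (Fin.last n) • (Fin.snoc v 0 : Fin (n + 1) → ℂ) := rfl

@[simp]
theorem translation_apply_last (v : Fin n → ℂ) (y : Fin (n + 1) → ℂ) :
    translation v y (Fin.last n) = y (Fin.last n) := by
  simp [translation_apply]

@[simp]
theorem translation_apply_castSucc (v : Fin n → ℂ) (y : Fin (n + 1) → ℂ) (i : Fin n) :
    translation v y i.castSucc = y i.castSucc + y (Fin.last n) * v i := by
  simp [translation_apply]

theorem translation_zero (y : Fin (n + 1) → ℂ) : translation 0 y = y := by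
  ext i
  cases i using Fin.lastCases <;> simp

theorem translation_add (v w : Fin n → ℂ) (y : Fin (n + 1) → ℂ) :
    translation (v + w) y = translation v (translation w y) := by
  ext i
  cases i using Fin.lastCases with
  | last => simp
  | cast i =>
    simp only [translation_apply_castSucc, translation_apply_last, Pi.add_apply]
    ring

/-- The action of `ℂ^n` on `ℂP^n` extending the translations of the chart `{y_n ≠ 0}`. It fixes
the hyperplane at infinity `{y_n = 0}` pointwise. -/
noncomputable instance : VAdd (Fin n → ℂ) (CP n) where
  vadd v x := Projectivization.map (translation v).toLinearMap (translation v).injective x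

theorem vadd_mk (v : Fin n → ℂ) (y : {y : Fin (n + 1) → ℂ // y ≠ 0}) :
    v +ᵥ mk y = mk ⟨translation v y, (translation v).map_ne_zero_iff.2 y.2⟩ := rfl

noncomputable instance : AddAction (Fin n → ℂ) (CP n) where
  zero_vadd x := by
    obtain ⟨y, rfl⟩ := mk_surjective x
    simp only [vadd_mk, translation_zero]
  add_vadd v w x := by
    obtain ⟨y, rfl⟩ := mk_surjective x
    simp only [vadd_mk, translation_add]

instance : ContinuousVAdd (Fin n → ℂ) (CP n) where
  continuous_vadd := by
    have continuous_translation : Continuous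
        fun q : (Fin n → ℂ) × {y : Fin (n + 1) → ℂ // y ≠ 0} => translation q.1 q.2.1 := by
      refine continuous_pi fun i => ?_
      cases i using Fin.lastCases with
      | last =>
        simp only [translation_apply_last]
        exact (continuous_coord _).comp continuous_snd
      | cast i =>
        simp only [translation_apply_castSucc]
        exact ((continuous_coord _).comp continuous_snd).add
          (((continuous_coord _).comp continuous_snd).mul
            ((continuous_apply i).comp continuous_fst))
    rw [(IsOpenQuotientMap.id.prodMap isOpenQuotientMap_mk).isQuotientMap.continuous_iff]
    exact isOpenQuotientMap_mk.continuous.comp (continuous_translation.subtype_mk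
      fun q => (translation q.1).map_ne_zero_iff.2 q.2.2)

theorem mk_eq_lastPoint_iff {y : {y : Fin (n + 2) → ℂ // y ≠ 0}} :
    mk y = lastPoint n ↔ ∀ i : Fin (n + 1), y.1 i.castSucc = 0 := by
  refine (Projectivization.mk_eq_mk_iff' ℂ _ _ y.2 _).trans ⟨?_, fun h => ⟨y.1 (Fin.last _), ?_⟩⟩
  · rintro ⟨c, hc⟩ i
    simp [← hc]
  · ext i
    cases i using Fin.lastCases <;> simp [h]

theorem isClosed_singleton_lastPoint : IsClosed {lastPoint n} := by
  rw [← isOpenQuotientMap_mk.isQuotientMap.isClosed_preimage]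
  simp only [preimage, mem_singleton_iff, mk_eq_lastPoint_iff, ofPred_forall]
  exact isClosed_iInter fun i => isClosed_singleton.preimage (continuous_coord _)

/-- A continuous extension to all of `ℂP^n` of the affine coordinates `y_i / y_n`, with which it
agrees where `|y_n|` is the maximum of the `|y_i|`. -/
noncomputable def affineCoord (x : CP n) : Fin n → ℂ :=
  Projectivization.lift (fun y : {y : Fin (n + 1) → ℂ // y ≠ 0} => fun i =>
      y.1 i.castSucc * (starRingEnd ℂ) (y.1 (Fin.last n)) / (‖y.1‖ : ℂ) ^ 2)
    (by
      rintro ⟨_, hx⟩ ⟨y, hy⟩ c rfl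
      have hc : c * (starRingEnd ℂ) c ≠ 0 := by simpa using left_ne_zero_of_smul hx
      ext i
      simp only [Pi.smul_apply, smul_eq_mul, map_mul, norm_smul, Complex.ofReal_mul, mul_pow,
        ← Complex.mul_conj']
      rw [mul_mul_mul_comm, mul_div_mul_left _ _ hc]) x

theorem affineCoord_mk (y : {y : Fin (n + 1) → ℂ // y ≠ 0}) (i : Fin n) :
    affineCoord (mk y) i =
      y.1 i.castSucc * (starRingEnd ℂ) (y.1 (Fin.last n)) / (‖y.1‖ : ℂ) ^ 2 := rfl

theorem continuous_affineCoord : Continuous (affineCoord (n := n)) := by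
  rw [isOpenQuotientMap_mk.isQuotientMap.continuous_iff]
  refine continuous_pi fun i => Continuous.div ?_ ?_ fun y => ?_
  · exact (continuous_coord _).mul (Complex.continuous_conj.comp (continuous_coord _))
  · fun_prop
  · simpa using y.2

theorem affineCoord_vadd_lastPoint {v : Fin (n + 1) → ℂ} (hv : ‖v‖ ≤ 1) :
    affineCoord (v +ᵥ lastPoint n) = v := by
  set y : Fin (n + 2) → ℂ := translation v (Pi.single (Fin.last (n + 1)) 1) with hy
  have y_last : y (Fin.last (n + 1)) = 1 := by simp [hy]
  have y_castSucc (i : Fin (n + 1)) : y i.castSucc = v i := by simp [hy]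
  have norm_y : ‖y‖ = 1 := by
    refine le_antisymm ((pi_norm_le_iff_of_nonneg zero_le_one).2 fun i => ?_) ?_
    · cases i using Fin.lastCases with
      | last => simp [y_last]
      | cast i => simpa [y_castSucc] using (norm_le_pi_norm v i).trans hv
    · simpa [y_last] using norm_le_pi_norm y (Fin.last (n + 1))
  ext i
  calc affineCoord (v +ᵥ lastPoint n) i
      = y i.castSucc * (starRingEnd ℂ) (y (Fin.last (n + 1))) / (‖y‖ : ℂ) ^ 2 := rfl
    _ = v i := by simp [y_last, y_castSucc, norm_y]

theorem eventually_affineCoord_vadd_lastPoint :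
    ∀ᶠ v in 𝓝 (0 : Fin (n + 1) → ℂ), affineCoord (v +ᵥ lastPoint n) = v := by
  filter_upwards [Metric.closedBall_mem_nhds (0 : Fin (n + 1) → ℂ) one_pos] with v hv
  exact affineCoord_vadd_lastPoint (mem_closedBall_zero_iff.1 hv)

end CP

theorem inclusion_U_sp_cp_connected_general {V : Type*} [NormedAddCommGroup V] [NormedSpace ℝ V]
    [FiniteDimensional ℝ V] {X : Type} [TopologicalSpace X] [AddAction V X] [ContinuousVAdd V X]
    {a : X} (ha : IsClosed {a}) {ψ : X → V} (hψ : Continuous ψ)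
    (hψa : ∀ᶠ v in 𝓝 (0 : V), ψ (v +ᵥ a) = v) {N : Type} [Fintype N]
    (hN : Fintype.card N + 1 < finrank ℝ V) {d : ℕ} (u : {s : SP X d // SPAvoids s a}) :
    Function.Bijective (HomotopyGroup.inducedMap N
      (⟨Subtype.val, continuous_subtype_val⟩ : C({s : SP X d // SPAvoids s a}, SP X d)) u) :=
  ⟨SP.inducedMap_avoids_injective hN ha hψ hψa u,
    SP.inducedMap_avoids_surjective (Nat.lt_of_succ_lt hN) ha hψ hψa u⟩

/-- **Lemma 3.10** (case `p = 0`): the inclusion `U_{0,d}(ℙ^{n+1}) ↪ SP^d(ℂP^{n+1})` of the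
subspace of unordered `d`-tuples avoiding `p₀ = [0 : ⋯ : 0 : 1]` is `2n`-connected: it
induces isomorphisms on homotopy groups `π_k` for all `0 ≤ k ≤ 2n` (at every basepoint). -/
theorem inclusion_U_sp_cp_connected (n d : ℕ) (hd : 1 ≤ d) :
    ∀ k : ℕ, k ≤ 2 * n →
      ∀ u : { s : SP (CP (n + 1)) d // SPAvoids s (lastPoint n) },
        Function.Bijective
          (HomotopyGroup.inducedMap (Fin k)
            (⟨Subtype.val, continuous_subtype_val⟩ :
              C({ s : SP (CP (n + 1)) d // SPAvoids s (lastPoint n) }, SP (CP (n + 1)) d))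
            u) := by
  intro k hk u
  refine inclusion_U_sp_cp_connected_general CP.isClosed_singleton_lastPoint
    CP.continuous_affineCoord CP.eventually_affineCoord_vadd_lastPoint ?_ u
  rw [finrank_real_of_complex, finrank_fin_fun, Fintype.card_fin]
  omega
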